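/- arXiv:1706.02742 — 2 statements merged into one kernel-verified Lean document; each statement's English description precedes it below -/
import Mathlib

section
/- Let φ : ℤ³ → ℤ³ be the group homomorphism φ(a,b,c) = (a+b, a+c, b+c). Then: (1) φ is injective; (2) the element (−1,−1,−1) is not in the range of φ; (3) the element (−2,−2,−2) is in the range of φ; and (4) the quotient group ℤ³ / range(φ) is isomorphic to ℤ/2ℤ, generated by the class of (−1,−1,−1). -/
/-!
The image of `φ(a,b,c) = (a+b, a+c, b+c)` is the index-two subgroup of triples with even
coordinate sum: the sum of the image is `2(a+b+c)`, and if `x + y + z = 2k` then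
`φ(k-z, k-y, k-x) = (x, y, z)`. So `range φ` is the kernel of the surjection "coordinate sum
mod 2" onto `ℤ/2`, and the first isomorphism theorem identifies the quotient with `ℤ/2`, the
class of `(-1,-1,-1)` going to `-3 = 1`.
-/

/-- The parity of the coordinate sum, as a homomorphism `ℤ³ → ℤ/2`. -/
def sumParity : ℤ × ℤ × ℤ →+ ZMod 2 where
  toFun p := ((p.1 + p.2.1 + p.2.2 : ℤ) : ZMod 2)
  map_zero' := by simp
  map_add' p q := by
    simp only [Prod.fst_add, Prod.snd_add]
    push_cast
    ring

theorem sumParity_neg_one : sumParity (-1, -1, -1) = 1 := by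
  change (((-1) + (-1) + (-1) : ℤ) : ZMod 2) = 1
  decide

theorem sumParity_surjective : Function.Surjective sumParity := fun t =>
  ⟨(t.val, 0, 0), by simp [sumParity]⟩

theorem range_eq_ker_sumParity (φ : ℤ × ℤ × ℤ →+ ℤ × ℤ × ℤ)
    (hφ : ∀ a b c : ℤ, φ (a, b, c) = (a + b, a + c, b + c)) :
    φ.range = sumParity.ker := by
  ext ⟨x, y, z⟩
  have hker : (x, y, z) ∈ sumParity.ker ↔ (2 : ℤ) ∣ x + y + z :=
    ZMod.intCast_zmod_eq_zero_iff_dvd (x + y + z) 2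
  rw [hker, AddMonoidHom.mem_range]
  constructor
  · rintro ⟨⟨a, b, c⟩, h⟩
    rw [hφ] at h
    simp only [Prod.mk.injEq] at h
    omega
  · rintro ⟨k, hk⟩
    refine ⟨(k - z, k - y, k - x), ?_⟩
    rw [hφ]
    simp only [Prod.mk.injEq]
    omega


/-- The twisted Čech coboundary map `φ(a,b,c) = (a+b, a+c, b+c)` on `ℤ³` is injective,
`(-1,-1,-1)` is not in its range but `(-2,-2,-2)` is, and the quotient `ℤ³ / range φ` is
isomorphic to `ℤ/2ℤ`, generated by the class of `(-1,-1,-1)`. -/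
theorem cech_twisted_coboundary_quotient
    (φ : ℤ × ℤ × ℤ →+ ℤ × ℤ × ℤ)
    (hφ : ∀ a b c : ℤ, φ (a, b, c) = (a + b, a + c, b + c)) :
    Function.Injective φ ∧
      ((-1, -1, -1) : ℤ × ℤ × ℤ) ∉ Set.range φ ∧
      ((-2, -2, -2) : ℤ × ℤ × ℤ) ∈ Set.range φ ∧
      ∃ e : (ℤ × ℤ × ℤ) ⧸ φ.range ≃+ ZMod 2,
        e (QuotientAddGroup.mk ((-1, -1, -1) : ℤ × ℤ × ℤ)) = 1 := by
  have hr := range_eq_ker_sumParity φ hφ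
  refine ⟨?_, ?_, ⟨(-1, -1, -1), by rw [hφ]; norm_num⟩, ?_⟩
  · rintro ⟨a, b, c⟩ ⟨a', b', c'⟩ h
    rw [hφ, hφ] at h
    simp only [Prod.mk.injEq] at h ⊢
    omega
  · intro h
    have h' : ((-1, -1, -1) : ℤ × ℤ × ℤ) ∈ sumParity.ker := hr ▸ h
    rw [AddMonoidHom.mem_ker, sumParity_neg_one] at h'
    exact one_ne_zero h'
  · exact ⟨(QuotientAddGroup.quotientAddEquivOfEq hr).trans
      (QuotientAddGroup.quotientKerEquivOfSurjective sumParity sumParity_surjective),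
      sumParity_neg_one⟩
end

section
/- Let g : ℝ → ℝ be an infinitely differentiable function satisfying g(t+1) = −g(t) for all t ∈ ℝ. Then there exists a unique infinitely differentiable function f : ℝ → ℝ such that f(t+1) = −f(t) for all t ∈ ℝ and the derivative of f equals g. (In fact f(t) = −(1/2)·∫ₜ^{t+1} g(s) ds works.) -/
/-!
Let `F` be any primitive of `g`. Antiperiodicity of `g` makes `F (t + 1) + F t` a function with
zero derivative, hence constant, so `F` has period `2`. Therefore `f t = (F t - F (t + 1)) / 2`,
which equals `-(1/2) ∫ s in t..t+1, g s`, is antiperiodic, and its derivative at `t` is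
`(g t - g (t + 1)) / 2 = g t`. Two antiperiodic primitives differ by an antiperiodic constant,
and such a constant `c = -c` is zero.
-/

open intervalIntegral in
/-- For every smooth antiperiodic function `g : ℝ → ℝ` (i.e. `g (t+1) = -g t`), there is a
unique smooth antiperiodic function `f` with `f' = g`
(in fact `f t = -(1/2) ∫ s in t..t+1, g s` works). -/
theorem antiperiodic_smooth_primitive
    (g : ℝ → ℝ) (hg : ContDiff ℝ (⊤ : ℕ∞) g) (hanti : ∀ t : ℝ, g (t + 1) = -g t) :
    ∃! f : ℝ → ℝ, ContDiff ℝ (⊤ : ℕ∞) f ∧ (∀ t : ℝ, f (t + 1) = -f t) ∧ deriv f = g := by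
  obtain ⟨F, hF⟩ : ∃ F : ℝ → ℝ, ∀ t, HasDerivAt F (g t) t :=
    ⟨fun t => ∫ s in (0 : ℝ)..t, g s, fun t => hg.continuous.integral_hasStrictDerivAt 0 t
      |>.hasDerivAt⟩
  have hF1 : ∀ t, HasDerivAt (fun t => F (t + 1)) (g (t + 1)) t := fun t =>
    (hF (t + 1)).comp_add_const t 1
  have hsum : ∀ s t, F (s + 1) + F s = F (t + 1) + F t := by
    have h : ∀ t, HasDerivAt (fun t => F (t + 1) + F t) 0 t := fun t => by
      have := (hF1 t).fun_add (hF t)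
      rwa [hanti, neg_add_cancel] at this
    exact is_const_of_deriv_eq_zero (fun t => (h t).differentiableAt) (fun t => (h t).deriv)
  have hf : ∀ t, HasDerivAt (fun t => (F t - F (t + 1)) / 2) (g t) t := fun t => by
    have := ((hF t).fun_sub (hF1 t)).div_const 2
    rw [hanti] at this
    exact this.congr_deriv (by ring)
  have hderiv : deriv (fun t => (F t - F (t + 1)) / 2) = g := funext fun t => (hf t).deriv
  refine ⟨fun t => (F t - F (t + 1)) / 2, ⟨?_, fun t => ?_, hderiv⟩, ?_⟩
  · refine contDiff_infty_iff_deriv.2 ⟨fun t => (hf t).differentiableAt, ?_⟩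
    rwa [hderiv]
  · have := hsum (t + 1) t
    dsimp only
    linarith
  · rintro h ⟨hh, hhanti, hh'⟩
    have hd : ∀ t, HasDerivAt (fun t => h t - (F t - F (t + 1)) / 2) 0 t := fun t => by
      have := ((hh.differentiable (by simp)) t).hasDerivAt.fun_sub (hf t)
      rwa [hh', sub_self] at this
    have hconst := is_const_of_deriv_eq_zero (fun t => (hd t).differentiableAt)
      (fun t => (hd t).deriv)
    funext t
    have h1 := hconst (t + 1) t
    have h2 := hsum (t + 1) t
    have h3 := hhanti t
    show h t = (F t - F (t + 1)) / 2
    linarith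
end
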